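/- arXiv:2311.03604 — 3 statements merged into one kernel-verified Lean document; each statement's English description precedes it below -/
import Mathlib

section
/- Let ȳ ∈ F(x̄) and u ∈ ℝⁿ with ∇_xP(x̄,ȳ)u ≠ 0. Suppose: (i) for every α ≥ 0 and every sequence τ_k ↓ 0 there exists v ∈ ℝᵐ such that liminf_{k→∞} dist(P(x̄,ȳ) + τ_k(α∇_xP(x̄,ȳ)u + ∇_yP(x̄,ȳ)v), C)/τ_k = 0; and (ii) for every (α,v) ≠ (0,0) with α ≥ 0 and α∇_xP(x̄,ȳ)u + ∇_yP(x̄,ȳ)v ∈ T_C(P(x̄,ȳ)), the only λ satisfying ∇_yP(x̄,ȳ)ᵀλ = 0 and λ ∈ N_C(P(x̄,ȳ); α∇_xP(x̄,ȳ)u + ∇_yP(x̄,ȳ)v) is λ = 0. Then F satisfies Robinson stability at (x̄,ȳ) in direction u. -/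
/-!
Suppose Robinson stability fails. Then there are `x_k → xb` in direction `u` and `y_k → yb` with
`dist(y_k, F(x_k)) > (k+1) η_k`, where `η_k := dist(P(x_k, y_k), C) → 0`. Minimizing
`dist(P(x_k, ·), C) + ε_k ‖· - y_k‖` with `ε_k := 1/(k+1) + √η_k → 0` produces infeasible points
`ỹ_k → yb` at which `dist(P(x_k, ·), C)` drops with rate at most `ε_k`
(`exists_penalized_min`). Projecting `P(x_k, ỹ_k)` onto `C` gives `z_k ∈ C` and a unit regular
normal `λ_k` at `z_k` with `‖∇_y P(x_k, ỹ_k)ᵀ λ_k‖ ≤ ε_k` (`exists_unit_normal`).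

Scale by `t_k := ‖x_k - xb‖ + ‖ỹ_k - yb‖ > 0`. Along a subsequence `(x_k - xb)/t_k → α u`,
`(ỹ_k - yb)/t_k → v` and `λ_k → λ`, with `(α, v) ≠ (0, 0)`, `‖λ‖ = 1` and `∇_y P(xb, yb)ᵀ λ = 0`.
Condition (i) for this `α` and `τ = t` provides competitors `yb + t_k v'` whose residual is
`o(t_k)`; since `ỹ_k` is a global minimizer up to the slope `ε_k`, also
`dist(P(x_k, ỹ_k), C) = o(t_k)`. Hence `(z_k - P(xb, yb))/t_k → α ∇_x P u + ∇_y P v`, and `λ` is a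
directional normal that condition (ii) forces to vanish (`no_bad_sequence`), a contradiction.
-/

open Filter Topology Set Metric
open scoped RealInnerProductSpace

noncomputable section

/-- `EN n` is the Euclidean space `ℝⁿ`. -/
abbrev EN (n : ℕ) := EuclideanSpace ℝ (Fin n)

/-- A sequence of positive reals converging to `0` (written `t_k ↓ 0`). -/
def SeqDown (t : ℕ → ℝ) : Prop := (∀ k, 0 < t k) ∧ Tendsto t atTop (𝓝 0)

section General

variable {E : Type*} [NormedAddCommGroup E] [NormedSpace ℝ E]

/-- The directional neighborhood `𝒱_{ε,δ}(u)` (centered at the origin). -/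
def dirNbhd (u : E) (ε δ : ℝ) : Set E :=
  {z | (u = 0 ∧ ‖z‖ < ε) ∨
       (u ≠ 0 ∧ (z = 0 ∨ (‖z‖ < ε ∧ z ≠ 0 ∧ ‖‖z‖⁻¹ • z - ‖u‖⁻¹ • u‖ ≤ δ)))}

/-- The (contingent/Bouligand) tangent cone to `Ω` at `x`, defined by sequences. -/
def tangentConeSeq (Ω : Set E) (x : E) : Set E :=
  {w | ∃ (t : ℕ → ℝ) (wk : ℕ → E), SeqDown t ∧ Tendsto wk atTop (𝓝 w) ∧
        ∀ k, x + t k • wk k ∈ Ω}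

/-- The regular (Clarke) tangent cone to `Ω` at `x`. -/
def clarkeTangentCone (Ω : Set E) (x : E) : Set E :=
  {w | ∀ (t : ℕ → ℝ) (xk : ℕ → E), SeqDown t → (∀ k, xk k ∈ Ω) →
        Tendsto xk atTop (𝓝 x) →
        ∃ yk : ℕ → E, (∀ k, yk k ∈ Ω) ∧
          Tendsto (fun k => (t k)⁻¹ • (yk k - xk k)) atTop (𝓝 w)}

/-- The sequence `x k` converges to `xb` in direction `u`, i.e. `x k = xb + t k • u k`
with `t_k ↓ 0` and `u k → u`. -/
def DirConv (xb u : E) (x : ℕ → E) : Prop :=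
  ∃ (t : ℕ → ℝ) (w : ℕ → E), SeqDown t ∧ Tendsto w atTop (𝓝 u) ∧
    ∀ k, x k = xb + t k • w k

end General

section Inner

variable {E : Type*} [NormedAddCommGroup E] [InnerProductSpace ℝ E]

/-- The regular (Fréchet) normal cone to `Ω` at `x`:
`⟪ζ, y - x⟫ ≤ o(‖y - x‖)` for `y ∈ Ω`. -/
def regNormalCone (Ω : Set E) (x : E) : Set E :=
  {ζ | ∀ ε > (0:ℝ), ∀ᶠ y in 𝓝[Ω] x, ⟪ζ, y - x⟫ ≤ ε * ‖y - x‖}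

/-- The limiting (Mordukhovich) normal cone to `Ω` at `x`. -/
def limNormalCone (Ω : Set E) (x : E) : Set E :=
  {ζ | ∃ (xk ζk : ℕ → E), (∀ k, xk k ∈ Ω) ∧ Tendsto xk atTop (𝓝 x) ∧
        (∀ k, ζk k ∈ regNormalCone Ω (xk k)) ∧ Tendsto ζk atTop (𝓝 ζ)}

/-- The limiting normal cone to `Ω` at `x` in direction `w`. -/
def dirNormalCone (Ω : Set E) (x w : E) : Set E :=
  {ζ | ∃ (t : ℕ → ℝ) (wk ζk : ℕ → E), SeqDown t ∧ Tendsto wk atTop (𝓝 w) ∧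
        (∀ k, x + t k • wk k ∈ Ω) ∧
        (∀ k, ζk k ∈ regNormalCone Ω (x + t k • wk k)) ∧ Tendsto ζk atTop (𝓝 ζ)}

/-- The Clarke normal cone: the closed convex hull of the limiting normal cone. -/
def clarkeNormalCone (Ω : Set E) (x : E) : Set E :=
  closure (convexHull ℝ (limNormalCone Ω x))

/-- A convex polyhedral set: a finite intersection of closed half-spaces. -/
def IsPolyhedral (Ω : Set E) : Prop :=
  ∃ (k : ℕ) (a : Fin k → E) (b : Fin k → ℝ), Ω = {x | ∀ i, ⟪a i, x⟫ ≤ b i}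

/-- A union of finitely many convex polyhedral sets. -/
def IsFiniteUnionOfPolyhedra (Ω : Set E) : Prop :=
  ∃ (N : ℕ) (Ωi : Fin N → Set E), (∀ i, IsPolyhedral (Ωi i)) ∧ Ω = ⋃ i, Ωi i

end Inner

section Problem

variable {E F G : Type*} [NormedAddCommGroup E] [NormedSpace ℝ E]
  [NormedAddCommGroup F] [NormedSpace ℝ F] [NormedAddCommGroup G] [NormedSpace ℝ G]

/-- The feasible map `F(x) = {y | P(x,y) ∈ C}`. -/
def feas (P : E → F → G) (C : Set G) (x : E) : Set F := {y | P x y ∈ C}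

/-- Robinson stability of the feasible map at `(xb, yb)` in direction `u`:
`dist(y, F(x)) ≤ κ dist(P(x,y), C)` for all `x ∈ xb + 𝒱_{ε,δ}(u)` and `y ∈ yb + ε𝔹`. -/
def RobinsonStable (P : E → F → G) (C : Set G) (xb : E) (yb : F) (u : E) : Prop :=
  ∃ κ : ℝ, 0 ≤ κ ∧ ∃ ε > (0:ℝ), ∃ δ > (0:ℝ), ∀ x y,
    x - xb ∈ dirNbhd u ε δ → ‖y - yb‖ < ε →
      EMetric.infEdist y (feas P C x) ≤ ENNReal.ofReal κ * EMetric.infEdist (P x y) C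

/-- The image directional derivative `Im D_x P(xb, yb; u)` of `P` w.r.t. `x`. -/
def imDx (P : E → F → G) (xb : E) (yb : F) (u : E) : Set G :=
  {d | ∃ (α : ℝ) (v : G), 0 ≤ α ∧ d = α • v ∧
    ∃ (t : ℕ → ℝ) (uk : ℕ → E), SeqDown t ∧ Tendsto uk atTop (𝓝 u) ∧
      (∀ k, P (xb + t k • uk k) yb ≠ P xb yb) ∧
      Tendsto (fun k => ‖P (xb + t k • uk k) yb - P xb yb‖⁻¹ •
        (P (xb + t k • uk k) yb - P xb yb)) atTop (𝓝 v)}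

/-- The optimal value function `V(x) = inf {f(x,y) | y ∈ F(x)}`. -/
def val (f : E → F → ℝ) (P : E → F → G) (C : Set G) (x : E) : ℝ :=
  sInf (f x '' feas P C x)

/-- The optimal solution set `S(x)`. -/
def sol (f : E → F → ℝ) (P : E → F → G) (C : Set G) (x : E) : Set F :=
  {y ∈ feas P C x | f x y = val f P C x}

/-- The directional solution set `S(xb; u)`. -/
def dirSol (f : E → F → ℝ) (P : E → F → G) (C : Set G) (xb u : E) : Set F :=
  {y ∈ sol f P C xb | ∃ (x : ℕ → E) (yk : ℕ → F), DirConv xb u x ∧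
      (∀ k, yk k ∈ sol f P C (x k)) ∧ Tendsto yk atTop (𝓝 y)}

/-- Continuity of the value function at `xb` in direction `u`. -/
def ValContinuousInDir (f : E → F → ℝ) (P : E → F → G) (C : Set G) (xb u : E) : Prop :=
  ∀ x : ℕ → E, DirConv xb u x →
    Tendsto (fun k => val f P C (x k)) atTop (𝓝 (val f P C xb))

/-- Restricted inf-compactness at `xb` in direction `u` with compact set `Ωu`
(including the requirement that `V(xb)` be finite). -/
def RestrictedInfCompact (f : E → F → ℝ) (P : E → F → G) (C : Set G)
    (xb u : E) (Ωu : Set F) : Prop :=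
  IsCompact Ωu ∧ (feas P C xb).Nonempty ∧ BddBelow (f xb '' feas P C xb) ∧
  ∃ ε > (0:ℝ), ∃ δ > (0:ℝ), ∀ x : E, x - xb ∈ dirNbhd u ε δ →
    val f P C x < val f P C xb + ε → (sol f P C x ∩ Ωu).Nonempty

/-- Inner semicontinuity of the solution map at `(xb, yb)` in direction `u`. -/
def InnerSemicontinuousInDir (f : E → F → ℝ) (P : E → F → G) (C : Set G)
    (xb : E) (yb : F) (u : E) : Prop :=
  ∀ x : ℕ → E, DirConv xb u x →
    ∃ yk : ℕ → F, (∀ k, yk k ∈ sol f P C (x k)) ∧ Tendsto yk atTop (𝓝 yb)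

/-- The upper Dini directional derivative (in the Hadamard sense), as an `EReal`. -/
def DiniUpper (V : E → ℝ) (xb u : E) : EReal :=
  Filter.limsup (fun q : ℝ × E => (((V (xb + q.1 • q.2) - V xb) / q.1 : ℝ) : EReal))
    ((𝓝[>] (0:ℝ)) ×ˢ 𝓝 u)

/-- The lower Dini directional derivative (in the Hadamard sense), as an `EReal`. -/
def DiniLower (V : E → ℝ) (xb u : E) : EReal :=
  Filter.liminf (fun q : ℝ × E => (((V (xb + q.1 • q.2) - V xb) / q.1 : ℝ) : EReal))
    ((𝓝[>] (0:ℝ)) ×ˢ 𝓝 u)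

end Problem

/-! ### Directional neighborhoods -/

/-- Members of a directional neighborhood of `u ≠ 0`, with the case `z = 0` absorbed. -/
lemma dirNbhd_bounds {E : Type*} [NormedAddCommGroup E] [NormedSpace ℝ E] {u z : E} {ε δ : ℝ}
    (hu : u ≠ 0) (hε : 0 < ε) (hz : z ∈ dirNbhd u ε δ) :
    ‖z‖ < ε ∧ ‖z - ‖z‖ • (‖u‖⁻¹ • u)‖ ≤ δ * ‖z‖ := by
  rcases hz with ⟨h, _⟩ | ⟨_, rfl | ⟨h1, h2, h3⟩⟩
  · exact absurd h hu
  · simpa using hε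
  · refine ⟨h1, ?_⟩
    have hz0 : ‖z‖ ≠ 0 := norm_ne_zero_iff.2 h2
    have : z - ‖z‖ • (‖u‖⁻¹ • u) = ‖z‖ • (‖z‖⁻¹ • z - ‖u‖⁻¹ • u) := by
      rw [smul_sub, smul_smul ‖z‖ ‖z‖⁻¹, mul_inv_cancel₀ hz0, one_smul]
    rw [this, norm_smul, norm_norm, mul_comm]
    exact mul_le_mul_of_nonneg_right h3 (norm_nonneg _)

/-! ### Slope of the residual and multipliers -/

/-- A finite-dimensional substitute for Ekeland's principle: a point `y` violating the error bound
with constant `κ ≥ ε⁻¹` has a nearby infeasible point which minimizes the residual up to the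
slope `ε`. -/
lemma exists_penalized_min {m p : ℕ} (g : EN m → EN p) (hg : Continuous g)
    (C : Set (EN p)) (hne : C.Nonempty) (y : EN m) {ε κ : ℝ} (hε : 0 < ε)
    (hεκ : 1 ≤ κ * ε)
    (hbad : ENNReal.ofReal κ * infEDist (g y) C < infEDist y {y' | g y' ∈ C}) :
    ∃ y', ε * ‖y' - y‖ ≤ infDist (g y) C ∧ g y' ∉ C ∧
      ∀ w, infDist (g y') C ≤ infDist (g w) C + ε * ‖w - y'‖ := by
  have hcont : Continuous fun w => infDist (g w) C + ε * dist w y := by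
    have := (continuous_infDist_pt C).comp hg
    exact this.add (by fun_prop)
  have hlim : Tendsto (fun w => infDist (g w) C + ε * dist w y) (cocompact (EN m)) atTop := by
    refine tendsto_atTop_mono (f := fun w => ε * dist w y) (fun w => ?_) ?_
    · linarith [infDist_nonneg (x := g w) (s := C)]
    · exact (tendsto_dist_right_cocompact_atTop y).const_mul_atTop hε
  obtain ⟨y', hy'⟩ := hcont.exists_forall_le hlim
  have h1 : ε * ‖y' - y‖ ≤ infDist (g y) C := by
    have := hy' y
    simp only [dist_self, mul_zero, add_zero] at this
    rw [← dist_eq_norm]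
    linarith [infDist_nonneg (x := g y') (s := C)]
  refine ⟨y', h1, fun hmem => ?_, fun w => ?_⟩
  · have h2 : infEDist y {y' | g y' ∈ C} ≤ edist y y' := infEDist_le_edist_of_mem hmem
    have hκ : 0 ≤ κ := by nlinarith
    have h3 : edist y y' ≤ ENNReal.ofReal κ * infEDist (g y) C := by
      rw [← ENNReal.ofReal_toReal (infEDist_ne_top (x := g y) hne), ← ENNReal.ofReal_mul hκ,
        edist_dist]
      apply ENNReal.ofReal_le_ofReal
      rw [dist_comm, dist_eq_norm]
      change _ ≤ κ * infDist (g y) C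
      calc ‖y' - y‖ ≤ (κ * ε) * ‖y' - y‖ := le_mul_of_one_le_left (norm_nonneg _) hεκ
        _ = κ * (ε * ‖y' - y‖) := by ring
        _ ≤ _ := mul_le_mul_of_nonneg_left h1 hκ
    exact absurd (h2.trans h3) (not_le.2 hbad)
  · have h2 := hy' w
    have h3 : dist w y ≤ dist w y' + dist y' y := dist_triangle _ _ _
    rw [← dist_eq_norm]
    nlinarith

/-- First-order condition at an infeasible point minimizing the residual up to the slope `ε`: the
normalized projection residual is a regular normal, almost annihilated by the adjoint of `g'`. -/
lemma exists_unit_normal {m p : ℕ} (g : EN m → EN p) (g' : EN m →L[ℝ] EN p)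
    (C : Set (EN p)) (hC : IsClosed C) (hne : C.Nonempty) (y : EN m) {ε : ℝ}
    (hg : HasFDerivAt g g' y) (hy : g y ∉ C)
    (hmin : ∀ w, infDist (g y) C ≤ infDist (g w) C + ε * ‖w - y‖) :
    ∃ z ∈ C, ∃ lam : EN p, ‖lam‖ = 1 ∧ ‖g y - z‖ = infDist (g y) C ∧
      lam ∈ regNormalCone C z ∧ ∀ w, |⟪lam, g' w⟫| ≤ ε * ‖w‖ := by
  obtain ⟨z, hz, hzd⟩ := hC.exists_infDist_eq_dist hne (g y)
  rw [dist_eq_norm] at hzd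
  set r := g y - z with hr
  have hr0 : r ≠ 0 := fun h => hy (by rw [sub_eq_zero.1 h]; exact hz)
  have hrpos : 0 < ‖r‖ := norm_pos_iff.2 hr0
  refine ⟨z, hz, ‖r‖⁻¹ • r, ?_, hzd.symm, ?_, ?_⟩
  · rw [norm_smul, norm_inv, norm_norm, inv_mul_cancel₀ hrpos.ne']
  · intro e he
    have hball : ∀ᶠ c in 𝓝[C] z, c ∈ ball z (2 * e * ‖r‖) :=
      mem_nhdsWithin_of_mem_nhds (ball_mem_nhds _ (by positivity))
    filter_upwards [hball, self_mem_nhdsWithin] with c hc hcC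
    rw [mem_ball, dist_eq_norm] at hc
    have h1 : ‖r‖ ≤ ‖r - (c - z)‖ := by
      have := infDist_le_dist_of_mem (x := g y) hcC
      rw [hzd, dist_eq_norm] at this
      have e1 : r - (c - z) = g y - c := by rw [hr]; abel
      rwa [e1]
    have h2 : ‖r‖ ^ 2 ≤ ‖r - (c - z)‖ ^ 2 := pow_le_pow_left₀ (norm_nonneg _) h1 2
    rw [norm_sub_sq_real r (c - z)] at h2
    rw [real_inner_smul_left, inv_mul_le_iff₀ hrpos]
    nlinarith [norm_nonneg (c - z)]
  · -- One-sided directional derivative of `‖g · - z‖` at `y`.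
    have key : ∀ w, -(ε * ‖w‖) ≤ ⟪‖r‖⁻¹ • r, g' w⟫ := by
      intro w
      have hline : HasDerivAt (fun t : ℝ => y + t • w) w 0 := by
        simpa using ((hasDerivAt_id (0:ℝ)).smul_const w).const_add y
      have hd : HasDerivAt (fun t : ℝ => g (y + t • w) - z) (g' w) 0 := by
        have hg0 : HasFDerivAt g g' (y + (0:ℝ) • w) := by simpa using hg
        exact (hg0.comp_hasDerivAt (0:ℝ) hline).sub_const z
      have hn := hd.norm_sq.sqrt (by simpa [← hr] using hr0)
      simp only [Real.sqrt_sq (norm_nonneg _), zero_smul, add_zero, ← hr] at hn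
      have hval : 2 * ⟪r, g' w⟫ / (2 * ‖r‖) = ⟪‖r‖⁻¹ • r, g' w⟫ := by
        rw [real_inner_smul_left]; field_simp
      rw [hval] at hn
      have hs := (hasDerivAt_iff_tendsto_slope.1 hn).mono_left
        (nhdsWithin_mono (0:ℝ) (fun t (ht : 0 < t) => ht.ne') : 𝓝[>] (0:ℝ) ≤ _)
      refine ge_of_tendsto hs ?_
      filter_upwards [self_mem_nhdsWithin] with t ht
      have ht : 0 < t := ht
      rw [slope_def_field]
      simp only [zero_smul, add_zero, sub_zero, ← hr]
      rw [le_div_iff₀ ht]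
      have h1 := hmin (y + t • w)
      have h2 := infDist_le_dist_of_mem (x := g (y + t • w)) hz
      rw [dist_eq_norm] at h2
      rw [add_sub_cancel_left, norm_smul, Real.norm_of_nonneg ht.le] at h1
      nlinarith
    intro w
    have h1 := key w
    have h2 := key (-w)
    rw [map_neg, inner_neg_right, norm_neg] at h2
    exact abs_le.2 ⟨h1, by linarith⟩

/-! ### Passage to the limit -/

/-- The quotients in condition (i) are bounded, so that a vanishing `liminf` is a genuine one and
is realized along a subsequence. -/
lemma exists_subseq_of_liminf {p : ℕ} (C : Set (EN p)) (a d : EN p) (ha : a ∈ C) (τ : ℕ → ℝ)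
    (hτ : SeqDown τ)
    (h : Filter.liminf (fun k => infDist (a + τ k • d) C / τ k) atTop = 0) :
    ∃ φ : ℕ → ℕ, StrictMono φ ∧
      Tendsto (fun k => infDist (a + τ (φ k) • d) C / τ (φ k)) atTop (𝓝 0) := by
  have hbd : ∀ k, infDist (a + τ k • d) C / τ k ≤ ‖d‖ := by
    intro k
    rw [div_le_iff₀ (hτ.1 k)]
    have := infDist_le_dist_of_mem (x := a + τ k • d) ha
    rwa [dist_eq_norm, add_sub_cancel_left, norm_smul, Real.norm_of_nonneg (hτ.1 k).le,
      mul_comm] at this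
  have hb : IsBoundedUnder (· ≤ ·) atTop (fun k => infDist (a + τ k • d) C / τ k) :=
    isBoundedUnder_of ⟨‖d‖, hbd⟩
  have hfreq : ∀ j : ℕ, ∃ᶠ k in atTop, infDist (a + τ k • d) C / τ k < 1 / ((j:ℝ) + 1) := by
    intro j
    refine frequently_lt_of_liminf_lt hb.isCoboundedUnder_ge ?_
    rw [h]; positivity
  obtain ⟨φ, hφ, hlt⟩ := extraction_forall_of_frequently hfreq
  refine ⟨φ, hφ, squeeze_zero (fun k => ?_) (fun k => (hlt k).le)
    tendsto_one_div_add_atTop_nhds_zero_nat⟩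
  exact div_nonneg infDist_nonneg (hτ.1 _).le

/-- Under conditions (i) and (ii) there is no sequence of infeasible points `(x k, y k)`
approaching `(xb, yb)` with `x k → xb` in direction `u` and asymptotically vanishing slope of the
residual in `y`, in the sense of the multipliers `lam k`. -/
lemma no_bad_sequence {n m p : ℕ} (P : EN n → EN m → EN p)
    (hP : ContDiff ℝ 1 fun q : EN n × EN m => P q.1 q.2)
    (C : Set (EN p))
    (xb u : EN n) (yb : EN m) (hyb : P xb yb ∈ C) (hu : u ≠ 0)
    (hgeom : ∀ α : ℝ, 0 ≤ α → ∀ τ : ℕ → ℝ, SeqDown τ → ∃ v : EN m,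
      Filter.liminf
        (fun k => infDist (P xb yb + τ k •
          (α • fderiv ℝ (fun x => P x yb) xb u + fderiv ℝ (P xb) yb v)) C / τ k) atTop = 0)
    (hFOSCMS : ∀ (α : ℝ) (v : EN m), 0 ≤ α → ¬(α = 0 ∧ v = 0) →
      α • fderiv ℝ (fun x => P x yb) xb u + fderiv ℝ (P xb) yb v ∈
        tangentConeSeq C (P xb yb) →
      ∀ lam : EN p, (∀ w, ⟪lam, fderiv ℝ (P xb) yb w⟫ = 0) →
        lam ∈ dirNormalCone C (P xb yb)
          (α • fderiv ℝ (fun x => P x yb) xb u + fderiv ℝ (P xb) yb v) → lam = 0)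
    (x : ℕ → EN n) (y : ℕ → EN m) (z lam : ℕ → EN p) (ε δ : ℕ → ℝ)
    (hε : Tendsto ε atTop (𝓝 0)) (hδ : Tendsto δ atTop (𝓝 0)) (hδ0 : ∀ k, 0 ≤ δ k)
    (hx : Tendsto x atTop (𝓝 xb)) (hy : Tendsto y atTop (𝓝 yb))
    (hxu : ∀ k, ‖x k - xb - ‖x k - xb‖ • (‖u‖⁻¹ • u)‖ ≤ δ k * ‖x k - xb‖)
    (hyC : ∀ k, P (x k) (y k) ∉ C)
    (hmin : ∀ k w, infDist (P (x k) (y k)) C ≤ infDist (P (x k) w) C + ε k * ‖w - y k‖)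
    (hz : ∀ k, z k ∈ C) (hlam : ∀ k, ‖lam k‖ = 1)
    (hzd : ∀ k, ‖P (x k) (y k) - z k‖ = infDist (P (x k) (y k)) C)
    (hN : ∀ k, lam k ∈ regNormalCone C (z k))
    (hadj : ∀ k w, |⟪lam k, fderiv ℝ (P (x k)) (y k) w⟫| ≤ ε k * ‖w‖) : False := by
  set Q : EN n × EN m → EN p := fun q => P q.1 q.2 with hQ
  have hdiff : ∀ q, HasFDerivAt Q (fderiv ℝ Q q) q := fun q =>
    (hP.differentiable (by norm_num) q).hasFDerivAt
  have hDy : ∀ a b w, fderiv ℝ (P a) b w = fderiv ℝ Q (a, b) (0, w) := by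
    intro a b w
    have h := (hdiff (a, b)).comp b (hasFDerivAt_prodMk_right a b)
    have h' : HasFDerivAt (P a) _ b := h
    rw [h'.fderiv]; simp
  have hDx : ∀ a b w, fderiv ℝ (fun x => P x b) a w = fderiv ℝ Q (a, b) (w, 0) := by
    intro a b w
    have h := HasFDerivAt.comp (f := fun e => (e, b)) a (hdiff (a, b))
      (hasFDerivAt_prodMk_left (𝕜 := ℝ) a b)
    have h' : HasFDerivAt (fun x => P x b) _ a := h
    rw [h'.fderiv]; simp
  have hsum : ∀ (α : ℝ) v, α • fderiv ℝ (fun x => P x yb) xb u + fderiv ℝ (P xb) yb v =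
      fderiv ℝ Q (xb, yb) (α • u, v) := by
    intro α v
    rw [hDx, hDy, ← map_smul, ← map_add]; simp
  set t : ℕ → ℝ := fun k => ‖x k - xb‖ + ‖y k - yb‖ with ht
  have htpos : ∀ k, 0 < t k := by
    intro k
    by_contra hle
    have h1 : ‖x k - xb‖ = 0 := by
      have := norm_nonneg (x k - xb); have := norm_nonneg (y k - yb)
      simp only [ht] at hle; linarith
    have h2 : ‖y k - yb‖ = 0 := by
      have := norm_nonneg (x k - xb); have := norm_nonneg (y k - yb)
      simp only [ht] at hle; linarith
    rw [norm_eq_zero, sub_eq_zero] at h1 h2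
    exact hyC k (by rw [h1, h2]; exact hyb)
  have ht0 : Tendsto t atTop (𝓝 0) := by
    have h1 := (tendsto_iff_norm_sub_tendsto_zero.1 hx).add (tendsto_iff_norm_sub_tendsto_zero.1 hy)
    simpa using h1
  -- Compactness: normalized increments and multipliers converge along a subsequence.
  obtain ⟨⟨a, v, l⟩, -, σ, hσ, hlim⟩ :=
    (isCompact_closedBall (0 : ℝ × EN m × EN p) 1).tendsto_subseq
      (x := fun k => (‖x k - xb‖ / t k, (t k)⁻¹ • (y k - yb), lam k)) (by
        intro k
        have h1 := norm_nonneg (x k - xb)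
        have h2 := norm_nonneg (y k - yb)
        rw [mem_closedBall_zero_iff, Prod.norm_def, Prod.norm_def]
        refine max_le ?_ (max_le ?_ (hlam k).le)
        · change ‖‖x k - xb‖ / t k‖ ≤ 1
          rw [Real.norm_of_nonneg (div_nonneg h1 (htpos k).le), div_le_one (htpos k)]
          simp only [ht]; linarith
        · change ‖(t k)⁻¹ • (y k - yb)‖ ≤ 1
          rw [norm_smul, norm_inv, Real.norm_of_nonneg (htpos k).le, inv_mul_le_one₀ (htpos k)]
          simp only [ht]; linarith)
  have hla : Tendsto (fun k => ‖x (σ k) - xb‖ / t (σ k)) atTop (𝓝 a) :=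
    (continuous_fst.tendsto _).comp hlim
  have hlv : Tendsto (fun k => (t (σ k))⁻¹ • (y (σ k) - yb)) atTop (𝓝 v) :=
    ((continuous_fst.comp continuous_snd).tendsto _).comp hlim
  have hll : Tendsto (fun k => lam (σ k)) atTop (𝓝 l) :=
    ((continuous_snd.comp continuous_snd).tendsto _).comp hlim
  have hl1 : ‖l‖ = 1 := by
    refine tendsto_nhds_unique hll.norm ?_
    simp [hlam]
  have ha0 : 0 ≤ a := ge_of_tendsto' hla fun k => div_nonneg (norm_nonneg _) (htpos _).le
  have hav : a + ‖v‖ = 1 := by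
    refine tendsto_nhds_unique (hla.add hlv.norm) ?_
    have : (fun k => ‖x (σ k) - xb‖ / t (σ k) + ‖(t (σ k))⁻¹ • (y (σ k) - yb)‖) =
        fun _ => (1:ℝ) := by
      funext k
      rw [norm_smul, norm_inv, Real.norm_of_nonneg (htpos _).le, ← div_eq_inv_mul, ← add_div]
      exact div_self (htpos _).ne'
    rw [this]; exact tendsto_const_nhds
  have hunorm : 0 < ‖u‖ := norm_pos_iff.2 hu
  set α : ℝ := a * ‖u‖⁻¹ with hα
  have hα0 : 0 ≤ α := by positivity
  have hαv : ¬(α = 0 ∧ v = 0) := by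
    rintro ⟨h1, h2⟩
    have : a = 0 := by
      rcases mul_eq_zero.1 h1 with h | h
      · exact h
      · exact absurd h (inv_pos.2 hunorm).ne'
    rw [this, h2] at hav; simp at hav
  have hσt := hσ.tendsto_atTop
  have hlx : Tendsto (fun k => (t (σ k))⁻¹ • (x (σ k) - xb)) atTop (𝓝 (α • u)) := by
    have h1 : Tendsto (fun k => (‖x (σ k) - xb‖ / t (σ k)) • (‖u‖⁻¹ • u)) atTop (𝓝 (α • u)) := by
      have := hla.smul_const (‖u‖⁻¹ • u)
      rwa [smul_smul] at this
    have h2 : Tendsto (fun k => (t (σ k))⁻¹ • (x (σ k) - xb) -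
        (‖x (σ k) - xb‖ / t (σ k)) • (‖u‖⁻¹ • u)) atTop (𝓝 0) := by
      refine squeeze_zero_norm (fun k => ?_) (hδ.comp hσt)
      have hk := htpos (σ k)
      have e1 : (t (σ k))⁻¹ • (x (σ k) - xb) - (‖x (σ k) - xb‖ / t (σ k)) • (‖u‖⁻¹ • u) =
          (t (σ k))⁻¹ • (x (σ k) - xb - ‖x (σ k) - xb‖ • (‖u‖⁻¹ • u)) := by
        rw [smul_sub _ (x (σ k) - xb), smul_smul (t (σ k))⁻¹ ‖x (σ k) - xb‖, div_eq_inv_mul]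
      rw [e1, norm_smul, norm_inv, Real.norm_of_nonneg hk.le, inv_mul_le_iff₀ hk]
      refine (hxu _).trans ?_
      rw [mul_comm]
      refine mul_le_mul_of_nonneg_right ?_ (hδ0 _)
      simp only [ht]
      linarith [norm_nonneg (y (σ k) - yb)]
    simpa using h2.add h1
  obtain ⟨v', hv'⟩ := hgeom α hα0 (fun k => t (σ k)) ⟨fun k => htpos _, ht0.comp hσt⟩
  obtain ⟨φ, hφ, hφlim⟩ := exists_subseq_of_liminf C _ _ hyb _
    ⟨fun k => htpos _, ht0.comp hσt⟩ hv'
  rw [hsum] at hφlim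
  -- From here on, everything is read along the composed subsequence `ρ`.
  set ρ : ℕ → ℕ := fun k => σ (φ k) with hρ
  have hφt := hφ.tendsto_atTop
  have hρt : Tendsto ρ atTop atTop := hσt.comp hφt
  have hlx' : Tendsto (fun k => (t (ρ k))⁻¹ • (x (ρ k) - xb)) atTop (𝓝 (α • u)) := hlx.comp hφt
  have hlv' : Tendsto (fun k => (t (ρ k))⁻¹ • (y (ρ k) - yb)) atTop (𝓝 v) := hlv.comp hφt
  have hll' : Tendsto (fun k => lam (ρ k)) atTop (𝓝 l) := hll.comp hφt
  have htρ : Tendsto (fun k => t (ρ k)) atTop (𝓝 0) := ht0.comp hρt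
  have hxρ : Tendsto (fun k => x (ρ k) - xb) atTop (𝓝 0) := by
    simpa using (hx.comp hρt).sub_const xb
  have hyρ : Tendsto (fun k => y (ρ k) - yb) atTop (𝓝 0) := by
    simpa using (hy.comp hρt).sub_const yb
  have hW : Tendsto (fun k => (t (ρ k))⁻¹ • (P (x (ρ k)) (y (ρ k)) - P xb yb)) atTop
      (𝓝 (fderiv ℝ Q (xb, yb) (α • u, v))) := by
    have h := (hdiff (xb, yb)).hasFDerivWithinAt (s := univ) |>.lim (l := atTop)
      (c := fun k => (t (ρ k))⁻¹) (d := fun k => (x (ρ k) - xb, y (ρ k) - yb)) (v := (α • u, v))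
      (hxρ.prodMk_nhds hyρ) (Eventually.of_forall fun _ => mem_univ _)
      (by simpa using hlx'.prodMk_nhds hlv')
    simpa [hQ] using h
  have hW' : Tendsto (fun k => (t (ρ k))⁻¹ • (P (x (ρ k)) (yb + t (ρ k) • v') - P xb yb)) atTop
      (𝓝 (fderiv ℝ Q (xb, yb) (α • u, v'))) := by
    have hd : Tendsto (fun k => t (ρ k) • v') atTop (𝓝 0) := by simpa using htρ.smul_const v'
    have hcd : Tendsto (fun k => (t (ρ k))⁻¹ • (t (ρ k) • v')) atTop (𝓝 v') := by
      have : (fun k => (t (ρ k))⁻¹ • (t (ρ k) • v')) = fun _ => v' := by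
        funext k; rw [smul_smul, inv_mul_cancel₀ (htpos _).ne', one_smul]
      rw [this]; exact tendsto_const_nhds
    have h := (hdiff (xb, yb)).hasFDerivWithinAt (s := univ) |>.lim (l := atTop)
      (c := fun k => (t (ρ k))⁻¹) (d := fun k => (x (ρ k) - xb, t (ρ k) • v')) (v := (α • u, v'))
      (hxρ.prodMk_nhds hd) (Eventually.of_forall fun _ => mem_univ _)
      (by simpa only [Prod.smul_mk] using hlx'.prodMk_nhds hcd)
    simpa [hQ] using h
  set W' := fderiv ℝ Q (xb, yb) (α • u, v')
  have hres : Tendsto (fun k => infDist (P (x (ρ k)) (y (ρ k))) C / t (ρ k)) atTop (𝓝 0) := by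
    -- The competitor for `y k` is the point moved from `yb` by `t k` times the vector from (i).
    have hub : Tendsto (fun k => infDist (P xb yb + t (ρ k) • W') C / t (ρ k) +
        ‖(t (ρ k))⁻¹ • (P (x (ρ k)) (yb + t (ρ k) • v') - P xb yb) - W'‖ +
        ε (ρ k) * ‖v' - (t (ρ k))⁻¹ • (y (ρ k) - yb)‖) atTop (𝓝 0) := by
      have h1 := (hW'.sub_const W').norm
      have h2 := (hε.comp hρt).mul (hlv'.const_sub v').norm
      have h3 := (hφlim.add h1).add h2
      simpa using h3
    refine squeeze_zero (fun k => div_nonneg infDist_nonneg (htpos _).le) (fun k => ?_) hub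
    have hk := htpos (ρ k)
    rw [div_le_iff₀ hk]
    have h1 := hmin (ρ k) (yb + t (ρ k) • v')
    have h2 := infDist_le_infDist_add_dist (s := C) (x := P (x (ρ k)) (yb + t (ρ k) • v'))
      (y := P xb yb + t (ρ k) • W')
    have h3 : dist (P (x (ρ k)) (yb + t (ρ k) • v')) (P xb yb + t (ρ k) • W') =
        t (ρ k) * ‖(t (ρ k))⁻¹ • (P (x (ρ k)) (yb + t (ρ k) • v') - P xb yb) - W'‖ := by
      rw [dist_eq_norm, ← Real.norm_of_nonneg hk.le, ← norm_smul, Real.norm_of_nonneg hk.le,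
        smul_sub, smul_smul, mul_inv_cancel₀ hk.ne', one_smul, sub_sub]
    have h4 : ‖yb + t (ρ k) • v' - y (ρ k)‖ =
        t (ρ k) * ‖v' - (t (ρ k))⁻¹ • (y (ρ k) - yb)‖ := by
      rw [← Real.norm_of_nonneg hk.le, ← norm_smul, Real.norm_of_nonneg hk.le,
        smul_sub, smul_smul, mul_inv_cancel₀ hk.ne', one_smul]
      congr 1; abel
    rw [h4] at h1
    rw [h3] at h2
    have h5 : infDist (P xb yb + t (ρ k) • W') C / t (ρ k) * t (ρ k) =
      infDist (P xb yb + t (ρ k) • W') C := div_mul_cancel₀ _ hk.ne'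
    rw [add_mul, add_mul, h5]
    linarith
  set wk : ℕ → EN p := fun k => (t (ρ k))⁻¹ • (z (ρ k) - P xb yb) with hwk
  have hzk : ∀ k, P xb yb + t (ρ k) • wk k = z (ρ k) := by
    intro k
    simp only [hwk]
    rw [smul_smul, mul_inv_cancel₀ (htpos _).ne', one_smul]; abel
  have hwlim : Tendsto wk atTop (𝓝 (fderiv ℝ Q (xb, yb) (α • u, v))) := by
    have h2 : Tendsto (fun k => wk k -
        (t (ρ k))⁻¹ • (P (x (ρ k)) (y (ρ k)) - P xb yb)) atTop (𝓝 0) := by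
      refine squeeze_zero_norm (fun k => le_of_eq ?_) hres
      simp only [hwk]
      rw [← smul_sub, norm_smul, norm_inv, Real.norm_of_nonneg (htpos _).le, ← hzd,
        div_eq_inv_mul, ← norm_neg]
      congr 2; abel
    simpa using h2.add hW
  have hlD : ∀ w, ⟪l, fderiv ℝ (P xb) yb w⟫ = 0 := by
    intro w
    have hcont : Continuous fun q => fderiv ℝ Q q (0, w) :=
      (hP.continuous_fderiv (by norm_num)).clm_apply continuous_const
    have hpt : Tendsto (fun k => (x (ρ k), y (ρ k))) atTop (𝓝 (xb, yb)) :=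
      (hx.comp hρt).prodMk_nhds (hy.comp hρt)
    have h1 : Tendsto (fun k => fderiv ℝ (P (x (ρ k))) (y (ρ k)) w) atTop
        (𝓝 (fderiv ℝ (P xb) yb w)) := by
      simp only [hDy]
      exact (hcont.tendsto _).comp hpt
    have h2 := (hll'.inner (𝕜 := ℝ) h1).abs
    have h3 : Tendsto (fun k => ε (ρ k) * ‖w‖) atTop (𝓝 0) := by
      simpa using (hε.comp hρt).mul_const ‖w‖
    have h4 := le_of_tendsto_of_tendsto' h2 h3 (fun k => hadj (ρ k) w)
    exact abs_nonpos_iff.1 h4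
  have hdown : SeqDown fun k => t (ρ k) := ⟨fun k => htpos _, htρ⟩
  have hl0 := hFOSCMS α v hα0 hαv
    (by rw [hsum]; exact ⟨_, wk, hdown, hwlim, fun k => by rw [hzk]; exact hz _⟩) l hlD
    (by
      rw [hsum]
      exact ⟨_, wk, fun k => lam (ρ k), hdown, hwlim, fun k => by rw [hzk]; exact hz _,
        fun k => by rw [hzk]; exact hN _, hll'⟩)
  rw [hl0] at hl1
  simp at hl1

/-! ### Directional Robinson stability -/

/-- first-order sufficient conditions for directional Robinson stability
in the case `∇ₓP(xb,yb)u ≠ 0`. -/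
theorem stmt2 {n m p : ℕ} (f : EN n → EN m → ℝ) (P : EN n → EN m → EN p)
    (hf : ContDiff ℝ 1 fun q : EN n × EN m => f q.1 q.2)
    (hP : ContDiff ℝ 1 fun q : EN n × EN m => P q.1 q.2)
    (C : Set (EN p)) (hC : IsClosed C)
    (xb u : EN n) (yb : EN m) (hyb : yb ∈ feas P C xb)
    (hDx : fderiv ℝ (fun x => P x yb) xb u ≠ 0)
    (hgeom : ∀ α : ℝ, 0 ≤ α → ∀ τ : ℕ → ℝ, SeqDown τ → ∃ v : EN m,
      Filter.liminf
        (fun k => infDist (P xb yb + τ k •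
          (α • fderiv ℝ (fun x => P x yb) xb u + fderiv ℝ (P xb) yb v)) C / τ k) atTop = 0)
    (hFOSCMS : ∀ (α : ℝ) (v : EN m), 0 ≤ α → ¬(α = 0 ∧ v = 0) →
      α • fderiv ℝ (fun x => P x yb) xb u + fderiv ℝ (P xb) yb v ∈
        tangentConeSeq C (P xb yb) →
      ∀ lam : EN p, (∀ w, ⟪lam, fderiv ℝ (P xb) yb w⟫ = 0) →
        lam ∈ dirNormalCone C (P xb yb)
          (α • fderiv ℝ (fun x => P x yb) xb u + fderiv ℝ (P xb) yb v) → lam = 0) :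
    RobinsonStable P C xb yb u := by
  have hu : u ≠ 0 := by
    rintro rfl
    exact hDx (map_zero _)
  have hyb' : P xb yb ∈ C := hyb
  have hne : C.Nonempty := ⟨_, hyb'⟩
  by_contra hRS
  have hbad : ∀ k : ℕ, ∃ x y, x - xb ∈ dirNbhd u (1 / ((k:ℝ) + 1)) (1 / ((k:ℝ) + 1)) ∧
      ‖y - yb‖ < 1 / ((k:ℝ) + 1) ∧
      ENNReal.ofReal ((k:ℝ) + 1) * infEDist (P x y) C < infEDist y (feas P C x) := by
    intro k
    by_contra hcon
    push Not at hcon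
    have hpos : 0 < 1 / ((k:ℝ) + 1) := by positivity
    exact hRS ⟨(k:ℝ) + 1, by positivity, _, hpos, _, hpos, hcon⟩
  choose x y0 hxd hyd hlt using hbad
  have hpos : ∀ k : ℕ, 0 < 1 / ((k:ℝ) + 1) := fun k => by positivity
  have hinv := tendsto_one_div_add_atTop_nhds_zero_nat (𝕜 := ℝ)
  have hx : Tendsto x atTop (𝓝 xb) := tendsto_iff_norm_sub_tendsto_zero.2
    (squeeze_zero (fun _ => norm_nonneg _)
      (fun k => (dirNbhd_bounds hu (hpos k) (hxd k)).1.le) hinv)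
  have hy0 : Tendsto y0 atTop (𝓝 yb) := tendsto_iff_norm_sub_tendsto_zero.2
    (squeeze_zero (fun _ => norm_nonneg _) (fun k => (hyd k).le) hinv)
  set η : ℕ → ℝ := fun k => infDist (P (x k) (y0 k)) C with hη
  have hη0 : Tendsto η atTop (𝓝 0) := by
    have h1 : Tendsto (fun k => P (x k) (y0 k)) atTop (𝓝 (P xb yb)) :=
      (hP.continuous.tendsto (xb, yb)).comp (hx.prodMk_nhds hy0)
    have h2 := ((continuous_infDist_pt C).tendsto _).comp h1
    rwa [infDist_zero_of_mem hyb'] at h2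
  have hsq0 : Tendsto (fun k => √(η k)) atTop (𝓝 0) := by
    have h := (Real.continuous_sqrt.tendsto 0).comp hη0
    rwa [Real.sqrt_zero] at h
  -- `ε k ≥ √(η k)` keeps the minimizers near `y0 k`; `ε k ≥ 1/(k+1)` keeps them infeasible.
  set ε : ℕ → ℝ := fun k => 1 / ((k:ℝ) + 1) + √(η k) with hε
  have hεpos : ∀ k, 0 < ε k := fun k => add_pos_of_pos_of_nonneg (hpos k) (Real.sqrt_nonneg _)
  have hε0 : Tendsto ε atTop (𝓝 0) := by simpa [hε] using hinv.add hsq0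
  have hPk : ∀ a, Differentiable ℝ (P a) := fun a =>
    (hP.differentiable (by norm_num)).comp (f := fun b => (a, b)) (by fun_prop)
  have hstep : ∀ k, ∃ y', ε k * ‖y' - y0 k‖ ≤ infDist (P (x k) (y0 k)) C ∧ P (x k) y' ∉ C ∧
      ∀ w, infDist (P (x k) y') C ≤ infDist (P (x k) w) C + ε k * ‖w - y'‖ := by
    intro k
    refine exists_penalized_min (P (x k)) (hPk _).continuous C hne (y0 k) (hεpos k)
      (κ := (k:ℝ) + 1) ?_ (hlt k)
    have hk : (0:ℝ) < (k:ℝ) + 1 := by positivity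
    have h1 : ((k:ℝ) + 1) * (1 / ((k:ℝ) + 1)) = 1 := by field_simp
    simp only [hε]
    rw [mul_add, h1]
    linarith [mul_nonneg hk.le (Real.sqrt_nonneg (η k))]
  choose y hyη hyC hmin using hstep
  have hy : Tendsto y atTop (𝓝 yb) := by
    have h1 : Tendsto (fun k => y k - y0 k) atTop (𝓝 0) := by
      refine squeeze_zero_norm (fun k => ?_) hsq0
      have h2 : η k = √(η k) * √(η k) := (Real.mul_self_sqrt infDist_nonneg).symm
      have h3 : √(η k) * √(η k) ≤ ε k * √(η k) :=
        mul_le_mul_of_nonneg_right (by simp only [hε]; linarith [hpos k]) (Real.sqrt_nonneg _)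
      exact le_of_mul_le_mul_left ((hyη k).trans (h2.le.trans h3)) (hεpos k)
    simpa using h1.add hy0
  have hnormal := fun k => exists_unit_normal (P (x k)) (fderiv ℝ (P (x k)) (y k)) C hC hne (y k)
    (hPk _ _).hasFDerivAt (hyC k) (hmin k)
  choose z hz lam hlam hzd hN hadj using hnormal
  exact no_bad_sequence P hP C xb u yb hyb' hu hgeom hFOSCMS x y z lam ε _ hε0 hinv
    (fun k => (hpos k).le) hx hy (fun k => (dirNbhd_bounds hu (hpos k) (hxd k)).2) hyC hmin hz
    hlam hzd hN hadj
end
end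

section
/- Let ȳ ∈ F(x̄) and u ∈ ℝⁿ. If F satisfies Robinson stability at (x̄,ȳ) in direction u, then there exists v ∈ ℝᵐ such that ∇_xP(x̄,ȳ)u + ∇_yP(x̄,ȳ)v ∈ T_C(P(x̄,ȳ)). -/
/-!
Follow the ray `x = xb + t • u` as `t ↓ 0`. Since `P xb yb ∈ C`, differentiability of `P` bounds
the distance of `P (xb + t • u) yb` to `C` by `O(t)`, so Robinson stability provides feasible
points `yb + t • v_t` over `xb + t • u` with `‖v_t‖` bounded (`exists_bounded_feasible_rate`).
Compactness in `ℝᵐ` gives a limit `v` of the rates along a subsequence, and the difference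
quotients of `P` along `(xb, yb) + t • (u, v_t)`, which are tangent rates for `C`, converge to
the total derivative of `P` applied to `(u, v)` (`tendsto_diffQuot`). This limit is the sum of the
two partial derivatives.
-/

open Filter Topology Set Metric
open scoped RealInnerProductSpace

noncomputable section

/-- Positive multiples of `u` have exactly the direction of `u`, so only their length matters for
membership in the directional neighborhood. -/
lemma smul_mem_dirNbhd {E : Type*} [NormedAddCommGroup E] [NormedSpace ℝ E] (u : E)
    {ε δ t : ℝ} (hδ : 0 < δ) (ht : 0 < t) (htε : ‖t • u‖ < ε) : t • u ∈ dirNbhd u ε δ := by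
  by_cases hu : u = 0
  · exact Or.inl ⟨hu, htε⟩
  · refine Or.inr ⟨hu, Or.inr ⟨htε, smul_ne_zero ht.ne' hu, ?_⟩⟩
    have h : ‖t • u‖⁻¹ • t • u = ‖u‖⁻¹ • u := by
      rw [norm_smul, Real.norm_of_nonneg ht.le, smul_smul]
      congr 1
      field_simp
    rw [h, sub_self, norm_zero]
    exact hδ.le

/-- Difference quotients of a differentiable map along `z + t k • w k`, with `t k ↓ 0` and
`w k → w`, converge to the derivative in direction `w`. -/
lemma tendsto_diffQuot {E G : Type*} [NormedAddCommGroup E] [NormedSpace ℝ E]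
    [NormedAddCommGroup G] [NormedSpace ℝ G] {g : E → G} {g' : E →L[ℝ] G} {z w : E}
    (hg : HasFDerivAt g g' z) {t : ℕ → ℝ} (ht : SeqDown t) {wk : ℕ → E}
    (hw : Tendsto wk atTop (𝓝 w)) :
    Tendsto (fun k => (t k)⁻¹ • (g (z + t k • wk k) - g z)) atTop (𝓝 (g' w)) := by
  have hd : Tendsto (fun k => t k • wk k) atTop (𝓝 0) := by
    simpa using ht.2.smul hw
  refine HasFDerivWithinAt.lim (s := univ) hg.hasFDerivWithinAt hd
    (Eventually.of_forall fun _ => mem_univ _) ?_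
  refine hw.congr fun k => ?_
  rw [smul_smul, inv_mul_cancel₀ (ht.1 k).ne', one_smul]

/-- Robinson stability at `x = xb + t • u`, `y = yb` yields feasible points
`yb + t • v` whose rates `v` stay bounded as `t = t k ↓ 0`. -/
lemma exists_bounded_feasible_rate {E F G : Type*} [NormedAddCommGroup E] [NormedSpace ℝ E]
    [NormedAddCommGroup F] [NormedSpace ℝ F] [NormedAddCommGroup G] [NormedSpace ℝ G]
    {P : E → F → G} {C : Set G} {xb u : E} {yb : F} {A : E →L[ℝ] G}
    (hA : HasFDerivAt (fun x => P x yb) A xb) (hyb : yb ∈ feas P C xb)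
    (hRS : RobinsonStable P C xb yb u) {t : ℕ → ℝ} (ht : SeqDown t) :
    ∃ M : ℝ, ∀ᶠ k in atTop, ∃ v : F, ‖v‖ ≤ M ∧ P (xb + t k • u) (yb + t k • v) ∈ C := by
  obtain ⟨κ, hκ, ε, hε, δ, hδ, h⟩ := hRS
  have hq := (tendsto_diffQuot hA ht (tendsto_const_nhds (x := u))).norm
  have hsm : Tendsto (fun k => ‖t k • u‖) atTop (𝓝 0) := by
    simpa using (ht.2.smul_const u).norm
  set L : ℝ := ‖A u‖ + 1 with hL
  have hL0 : 0 < L := by positivity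
  refine ⟨κ * L + 1, ?_⟩
  filter_upwards [hq.eventually_lt_const (lt_add_one ‖A u‖), hsm.eventually_lt_const hε]
    with k hk1 hk2
  have htk := ht.1 k
  have hP : dist (P (xb + t k • u) yb) (P xb yb) ≤ L * t k := by
    rw [norm_smul, norm_inv, Real.norm_of_nonneg htk.le, inv_mul_lt_iff₀ htk] at hk1
    rw [dist_eq_norm]
    linarith
  have h1 := h (xb + t k • u) yb (by
    rw [add_sub_cancel_left]
    exact smul_mem_dirNbhd u hδ htk hk2) (by simpa using hε)
  have h2 : Metric.infEDist (P (xb + t k • u) yb) C ≤ ENNReal.ofReal (L * t k) := by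
    refine (Metric.infEDist_le_edist_of_mem (show P xb yb ∈ C from hyb)).trans ?_
    rw [edist_dist]
    exact ENNReal.ofReal_le_ofReal hP
  have h3 : Metric.infEDist yb (feas P C (xb + t k • u))
      < ENNReal.ofReal ((κ * L + 1) * t k) := by
    calc _ ≤ ENNReal.ofReal κ * ENNReal.ofReal (L * t k) := 
          le_trans h1 (mul_le_mul_right h2 _)
      _ = ENNReal.ofReal (κ * (L * t k)) := (ENNReal.ofReal_mul hκ).symm
      _ < _ := by
        rw [ENNReal.ofReal_lt_ofReal_iff (by positivity)]
        linarith
  obtain ⟨y, hy, hlt⟩ := Metric.infEDist_lt_iff.1 h3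
  rw [edist_dist, ENNReal.ofReal_lt_ofReal_iff (by positivity), dist_comm, dist_eq_norm] at hlt
  refine ⟨(t k)⁻¹ • (y - yb), ?_, ?_⟩
  · rw [norm_smul, norm_inv, Real.norm_of_nonneg htk.le, inv_mul_le_iff₀ htk]
    linarith
  · rw [smul_smul, mul_inv_cancel₀ htk.ne', one_smul, add_sub_cancel]
    exact hy

/-- directional Robinson stability implies feasibility of the
linearized system. -/
theorem stmt4 {n m p : ℕ} (f : EN n → EN m → ℝ) (P : EN n → EN m → EN p)
    (hf : ContDiff ℝ 1 fun q : EN n × EN m => f q.1 q.2)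
    (hP : ContDiff ℝ 1 fun q : EN n × EN m => P q.1 q.2)
    (C : Set (EN p)) (hC : IsClosed C)
    (xb u : EN n) (yb : EN m) (hyb : yb ∈ feas P C xb)
    (hRS : RobinsonStable P C xb yb u) :
    ∃ v : EN m, fderiv ℝ (fun x => P x yb) xb u + fderiv ℝ (P xb) yb v ∈
      tangentConeSeq C (P xb yb) := by
  have hD := (hP.differentiable one_ne_zero (xb, yb)).hasFDerivAt
  set D := fderiv ℝ (fun q : EN n × EN m => P q.1 q.2) (xb, yb)
  -- The partial derivatives are the restrictions of the total derivative to the two factors.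
  have hx : HasFDerivAt (fun x => P x yb) (D.comp (ContinuousLinearMap.inl ℝ _ _)) xb :=
    HasFDerivAt.comp (f := fun e => (e, yb)) (g := fun q : EN n × EN m => P q.1 q.2) xb hD
      (hasFDerivAt_prodMk_left xb yb)
  have hy : HasFDerivAt (P xb) (D.comp (ContinuousLinearMap.inr ℝ _ _)) yb :=
    HasFDerivAt.comp (f := fun e => (xb, e)) (g := fun q : EN n × EN m => P q.1 q.2) yb hD
      (hasFDerivAt_prodMk_right xb yb)
  have ht : SeqDown (fun k : ℕ => 1 / ((k : ℝ) + 1)) :=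
    ⟨fun k => by positivity, tendsto_one_div_add_atTop_nhds_zero_nat⟩
  obtain ⟨M, hM⟩ := exists_bounded_feasible_rate hx hyb hRS ht
  obtain ⟨N, hN⟩ := eventually_atTop.1 hM
  choose v hvM hvC using fun k : ℕ => hN (k + N) (Nat.le_add_left N k)
  obtain ⟨w, -, φ, hφ, hw⟩ := tendsto_subseq_of_bounded (isBounded_closedBall (x := 0) (r := M))
    (fun k => mem_closedBall_zero_iff.2 (hvM k))
  have hs : SeqDown (fun k : ℕ => 1 / (((φ k + N : ℕ) : ℝ) + 1)) :=
    ⟨fun k => by positivity,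
      ht.2.comp ((tendsto_add_atTop_nat N).comp hφ.tendsto_atTop)⟩
  have hlim := tendsto_diffQuot hD hs
    ((tendsto_const_nhds (x := u)).prodMk_nhds hw)
  refine ⟨w, fun k => 1 / (((φ k + N : ℕ) : ℝ) + 1), fun k =>
    (1 / (((φ k + N : ℕ) : ℝ) + 1))⁻¹ •
      (P (xb + (1 / (((φ k + N : ℕ) : ℝ) + 1)) • u)
        (yb + (1 / (((φ k + N : ℕ) : ℝ) + 1)) • v (φ k)) - P xb yb), hs, ?_, fun k => ?_⟩
  · rw [hx.fderiv, hy.fderiv]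
    have hsum : D (u, w) = (D.comp (ContinuousLinearMap.inl ℝ _ _)) u
        + (D.comp (ContinuousLinearMap.inr ℝ _ _)) w := by
      simp [← map_add]
    rw [← hsum]
    exact hlim
  · rw [smul_smul, mul_inv_cancel₀ (hs.1 k).ne', one_smul, add_sub_cancel]
    exact hvC (φ k)
end
end

section
/- Let x̄, u ∈ ℝⁿ. Suppose the restricted inf-compactness holds at x̄ in direction u with some compact set Ω_u and V is continuous at x̄ in direction u. Then S(x̄;u) ∩ Ω_u ≠ ∅; in particular S(x̄;u) is nonempty. -/
/-!
Along the ray `x k = xb + t k • u`, `t k ↓ 0`, the points eventually lie in the directional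
neighborhood (`eventually_ray_mem_dirNbhd`), and directional continuity of the value function
makes the restriction `V (x k) < V xb + ε` hold eventually. Restricted inf-compactness then
supplies minimizers `y k ∈ S (x k) ∩ Ωu`, and compactness a subsequence converging to some
`y ∈ Ωu`. Since `C` is closed and `P`, `f` are continuous, `y` is feasible at `xb` and
`f xb y = lim f (x k) (y k) = lim V (x k) = V xb`, so `y ∈ S(xb; u)`.
-/

open Filter Topology Set Metric
open scoped RealInnerProductSpace

noncomputable section

/-- A ray `t • u` issuing from the origin eventually enters every directional neighborhood of `u`:
for `u ≠ 0` its normalization is exactly that of `u`. -/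
lemma eventually_ray_mem_dirNbhd {E : Type*} [NormedAddCommGroup E] [NormedSpace ℝ E]
    (u : E) {ε δ : ℝ} (hε : 0 < ε) (hδ : 0 < δ) {t : ℕ → ℝ} (ht : SeqDown t) :
    ∀ᶠ k in atTop, t k • u ∈ dirNbhd u ε δ := by
  have hz : Tendsto (fun k => ‖t k • u‖) atTop (𝓝 0) := by
    simpa using (ht.2.smul_const u).norm
  filter_upwards [hz.eventually_lt_const hε] with k hk
  by_cases hu : u = 0
  · exact Or.inl ⟨hu, hk⟩
  · have htk := ht.1 k
    refine Or.inr ⟨hu, Or.inr ⟨hk, smul_ne_zero htk.ne' hu, ?_⟩⟩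
    have h : ‖t k • u‖⁻¹ • t k • u = ‖u‖⁻¹ • u := by
      rw [norm_smul, Real.norm_of_nonneg htk.le, smul_smul]
      congr 1
      field_simp
    rw [h, sub_self, norm_zero]
    exact hδ.le

/-- under directional restricted inf-compactness and directional
continuity of the value function, the directional solution set is nonempty. -/
theorem stmt6 {n m p : ℕ} (f : EN n → EN m → ℝ) (P : EN n → EN m → EN p)
    (hf : ContDiff ℝ 1 fun q : EN n × EN m => f q.1 q.2)
    (hP : ContDiff ℝ 1 fun q : EN n × EN m => P q.1 q.2)
    (C : Set (EN p)) (hC : IsClosed C)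
    (xb u : EN n) (Ωu : Set (EN m))
    (hRIC : RestrictedInfCompact f P C xb u Ωu)
    (hV : ValContinuousInDir f P C xb u) :
    (dirSol f P C xb u ∩ Ωu).Nonempty ∧ (dirSol f P C xb u).Nonempty := by
  obtain ⟨hΩ, -, -, ε, hε, δ, hδ, hne⟩ := hRIC
  let t : ℕ → ℝ := fun k => 1 / ((k : ℝ) + 1)
  have ht : SeqDown t := ⟨fun k => Nat.one_div_pos_of_nat, tendsto_one_div_add_atTop_nhds_zero_nat⟩
  let x : ℕ → EN n := fun k => xb + t k • u
  have hVx : Tendsto (fun k => val f P C (x k)) atTop (𝓝 (val f P C xb)) :=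
    hV x ⟨t, fun _ => u, ht, tendsto_const_nhds, fun _ => rfl⟩
  have hx : Tendsto x atTop (𝓝 xb) := by
    simpa [x] using (ht.2.smul_const u).const_add xb
  have hsol : ∀ᶠ k in atTop, (sol f P C (x k) ∩ Ωu).Nonempty := by
    filter_upwards [eventually_ray_mem_dirNbhd u hε hδ ht,
      hVx.eventually_lt_const (lt_add_of_pos_right _ hε)] with k hk hk'
    exact hne _ (by simpa [x] using hk) hk'
  obtain ⟨N, hN⟩ := eventually_atTop.1 hsol
  choose y hy using fun k => hN (k + N) (Nat.le_add_left N k)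
  obtain ⟨yb, hyb, φ, hφ, hlim⟩ := hΩ.tendsto_subseq fun k => (hy k).2
  have hψ : Tendsto (fun k => φ k + N) atTop atTop :=
    (tendsto_add_atTop_nat N).comp hφ.tendsto_atTop
  have hxy : Tendsto (fun k => (x (φ k + N), y (φ k))) atTop (𝓝 (xb, yb)) :=
    (hx.comp hψ).prodMk_nhds hlim
  have hfeas : yb ∈ feas P C xb :=
    hC.mem_of_tendsto ((hP.continuous.tendsto (xb, yb)).comp hxy)
      (Eventually.of_forall fun k => (hy (φ k)).1.1)
  have hval : f xb yb = val f P C xb := by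
    refine tendsto_nhds_unique ((hf.continuous.tendsto (xb, yb)).comp hxy) ?_
    exact (hVx.comp hψ).congr fun k => (hy (φ k)).1.2.symm
  have hmem : yb ∈ dirSol f P C xb u :=
    ⟨⟨hfeas, hval⟩, fun k => x (φ k + N), fun k => y (φ k),
      ⟨fun k => t (φ k + N), fun _ => u, ⟨fun k => ht.1 _, ht.2.comp hψ⟩,
        tendsto_const_nhds, fun _ => rfl⟩,
      fun k => (hy (φ k)).1, hlim⟩
  exact ⟨⟨yb, hmem, hyb⟩, ⟨yb, hmem⟩⟩
end
end
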